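/- For the noisy-POST(α,η) channel, the input distribution P₂(x|y') defined by P₂(X=1|Y'=0) = P₁(u₂|Y'=0)+P₁(u₃|Y'=0) and P₂(X=0|Y'=1) = P₁(u₀|Y'=1)+η·P₁(u₁|Y'=1)+(1-η)·P₁(u₂|Y'=1) induces the same output transition probability: P₂(y|y') = P₁(y|y') for all y',y ∈ {0,1}. -/

import Mathlib

open Finset

/-- The noisy-POST(α,η) channel law `Q(y|x,s')` (ZS structure):
if `x = s'` then `y = x` deterministically; for `s' = 0, x = 1` a Z channel with
`Q(1|1,0) = 1-α`; for `s' = 1, x = 0` an S channel with `Q(0|0,1) = 1-α`. -/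
noncomputable def Qch (α : ℝ) (x s' y : Bool) : ℝ :=
  if x = s' then (if y = x then 1 else 0)
  else if s' = false then (if y = true then 1 - α else α)
  else (if y = false then 1 - α else α)

/-- The noisy state evolution `Q(s|y)`: `S = 0` surely if `Y = 0`; if `Y = 1` then
`S = 1` w.p. `1-η` and `S = 0` w.p. `η`. -/
noncomputable def Qst (η : ℝ) (y s : Bool) : ℝ :=
  if y = false then (if s = false then 1 else 0)
  else (if s = false then η else 1 - η)

/-- The four strategies `u : Fin 4` mapping `s'` to `x`:
`u₀ ↦ (0,0)`, `u₁ ↦ (0,1)`, `u₂ ↦ (1,0)`, `u₃ ↦ (1,1)`. -/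
def strat (u : Fin 4) (s' : Bool) : Bool :=
  match u with
  | 0 => false
  | 1 => s'
  | 2 => !s'
  | 3 => true

/-- Output kernel induced by a strategy distribution `P₁(u|y')`. -/
noncomputable def outKernelU (α η : ℝ) (P₁ : Bool → Fin 4 → ℝ) (y' y : Bool) : ℝ :=
  ∑ s' : Bool, ∑ u : Fin 4, Qst η y' s' * P₁ y' u * Qch α (strat u s') s' y

/-- Output kernel induced by an input distribution `P₂(x|y')`. -/
noncomputable def outKernelX (α η : ℝ) (P₂ : Bool → Bool → ℝ) (y' y : Bool) : ℝ :=
  ∑ s' : Bool, ∑ x : Bool, Qst η y' s' * P₂ y' x * Qch α x s' y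

/-- for the noisy-POST(α,η) channel, the constructed input distribution
`P₂(x|y')` is a valid conditional PMF and induces the same output transition probability
as the strategy distribution `P₁(u|y')`. -/
theorem noisyPost_kernel_preserved (α η : ℝ) (hα0 : 0 ≤ α) (hα1 : α ≤ 1)
    (hη0 : 0 ≤ η) (hη1 : η ≤ 1)
    (P₁ : Bool → Fin 4 → ℝ)
    (h₁nn : ∀ y' u, 0 ≤ P₁ y' u) (h₁sum : ∀ y', ∑ u : Fin 4, P₁ y' u = 1)
    (P₂ : Bool → Bool → ℝ)
    (hP₂10 : P₂ false true = P₁ false 2 + P₁ false 3)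
    (hP₂00 : P₂ false false = 1 - (P₁ false 2 + P₁ false 3))
    (hP₂01 : P₂ true false = P₁ true 0 + η * P₁ true 1 + (1 - η) * P₁ true 2)
    (hP₂11 : P₂ true true = 1 - (P₁ true 0 + η * P₁ true 1 + (1 - η) * P₁ true 2)) :
    ((∀ y' x, 0 ≤ P₂ y' x) ∧ (∀ y', ∑ x : Bool, P₂ y' x = 1)) ∧
      ∀ y' y, outKernelX α η P₂ y' y = outKernelU α η P₁ y' y := by
  have s0 := h₁sum false
  have s1 := h₁sum true
  rw [Fin.sum_univ_four] at s0 s1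
  have a0 := h₁nn false 0
  have a1 := h₁nn false 1
  have a2 := h₁nn false 2
  have a3 := h₁nn false 3
  have b0 := h₁nn true 0
  have b1 := h₁nn true 1
  have b2 := h₁nn true 2
  have b3 := h₁nn true 3
  have c1 := mul_nonneg hη0 b1
  have c2 := mul_nonneg hη0 b2
  have d1 := mul_nonneg (sub_nonneg.2 hη1) b1
  have d2 := mul_nonneg (sub_nonneg.2 hη1) b2
  have e0 : P₁ false 0 = 1 - P₁ false 1 - P₁ false 2 - P₁ false 3 := by linarith
  have e1 : P₁ true 3 = 1 - P₁ true 0 - P₁ true 1 - P₁ true 2 := by linarith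
  refine ⟨⟨?_, ?_⟩, ?_⟩
  · rintro (_ | _) (_ | _)
    · rw [hP₂00]; linarith
    · rw [hP₂10]; linarith
    · rw [hP₂01]; linarith
    · rw [hP₂11]; linarith
  · rintro (_ | _)
    · rw [Fintype.sum_bool, hP₂00, hP₂10]; ring
    · rw [Fintype.sum_bool, hP₂01, hP₂11]; ring
  · rintro (_ | _) (_ | _) <;>
      simp [outKernelX, outKernelU, Fin.sum_univ_four, Qst, Qch, strat,
        hP₂00, hP₂10, hP₂01, hP₂11, e0, e1] <;> ring
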